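/- arXiv:1402.4559 — 2 statements merged into one kernel-verified Lean document; each statement's English description precedes it below -/
import Mathlib

section
/- Let R be a finite-dimensional algebra over a field k and suppose R is a local ring. Then R is a symmetric k-algebra (there exists a k-linear functional λ : R → k with λ(r*s) = λ(s*r) for all r, s and whose kernel contains no nonzero left ideals of R) if and only if R is a Frobenius k-algebra (there exists a k-linear functional whose kernel contains no nonzero left ideals of R) and the left socle soc(_R R) is not contained in the commutator subgroup [R,R]. -/
/-- The left socle of a ring `R`: the sum of all simple left ideals of `R`. -/
def leftSocle (R : Type*) [Ring R] : Ideal R :=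
  sSup {I : Ideal R | IsSimpleModule R I}

/-- The additive subgroup `[R,R]` of `R` generated by all commutators `r*s - s*r`. -/
def commutatorSubgroup (R : Type*) [Ring R] : AddSubgroup R :=
  AddSubgroup.closure {x : R | ∃ r s : R, x = r * s - s * r}

/-!
Let `λ` be a Frobenius functional. Since `R` is finite-dimensional, `s ↦ λ(· s)` is an isomorphism
from `R` onto its dual, so `R` is self-injective: if every `n` with `n x = 0` satisfies `n y = 0`,
then `y = x s` for some `s`. When `R` is local, the left annihilator of any `x ≠ 0` lies in the
Jacobson radical, which kills the socle; hence every socle element `y` belongs to `x R`. If `μ` is a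
trace with `μ y ≠ 0`, then `μ (s x) = μ (x s) = μ y ≠ 0`, so no left ideal containing `x` lies
in `ker μ`. Such a `μ` exists as soon as `y ∉ [R,R]`. Conversely, a symmetric Frobenius functional
vanishes on `[R,R]` but not on the nonzero left ideal `soc R`.
-/

section Commutators

variable {R : Type*} [Ring R]

theorem commutatorSubgroup_le_iff {H : AddSubgroup R} :
    commutatorSubgroup R ≤ H ↔ ∀ r s : R, r * s - s * r ∈ H := by
  rw [commutatorSubgroup, AddSubgroup.closure_le]
  constructor
  · exact fun h r s => h ⟨r, s, rfl⟩
  · rintro h _ ⟨r, s, rfl⟩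
    exact h r s

theorem commutatorSubgroup_le_ker_iff {A : Type*} [AddGroup A] {f : R →+ A} :
    commutatorSubgroup R ≤ f.ker ↔ ∀ r s : R, f (r * s) = f (s * r) := by
  simp only [commutatorSubgroup_le_iff, AddMonoidHom.mem_ker, map_sub, sub_eq_zero]

theorem smul_mem_commutatorSubgroup {k : Type*} [DistribSMul k R]
    [IsScalarTower k R R] [SMulCommClass k R R] (c : k) {x : R} (hx : x ∈ commutatorSubgroup R) :
    c • x ∈ commutatorSubgroup R := by
  have smul_commutator_mem (r s : R) : c • (r * s - s * r) ∈ commutatorSubgroup R := by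
    rw [smul_sub, ← smul_mul_assoc, ← mul_smul_comm]
    exact commutatorSubgroup_le_iff.1 le_rfl _ _
  have : commutatorSubgroup R ≤
      (commutatorSubgroup R).comap (DistribSMul.toAddMonoidHom R c) :=
    commutatorSubgroup_le_iff.2 smul_commutator_mem
  exact this hx

/-- The commutator subgroup `[R,R]` of a `k`-algebra `R`, regarded as a `k`-subspace, so that
an element outside it can be separated from it by a linear functional. -/
def commutatorSubmodule (k R : Type*) [CommSemiring k] [Ring R] [Algebra k R] :
    Submodule k R where
  __ := commutatorSubgroup R
  smul_mem' c _ := smul_mem_commutatorSubgroup c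

theorem exists_trace_ne_zero_of_notMem_commutatorSubgroup (k : Type*) [Field k] [Algebra k R]
    {y : R} (hy : y ∉ commutatorSubgroup R) :
    ∃ mu : R →ₗ[k] k, (∀ r s : R, mu (r * s) = mu (s * r)) ∧ mu y ≠ 0 := by
  have hy' : y ∉ commutatorSubmodule k R := hy
  obtain ⟨mu, hmu, hle⟩ := Submodule.exists_le_ker_of_notMem hy'
  exact ⟨mu, commutatorSubgroup_le_ker_iff (f := mu.toAddMonoidHom).1 hle, hmu⟩

end Commutators

section Socle

variable {R : Type*} [Ring R]

instance isSemisimpleModule_leftSocle : IsSemisimpleModule R (leftSocle R) := by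
  rw [leftSocle, sSup_eq_iSup]
  refine isSemisimpleModule_biSup_of_isSemisimpleModule_submodule fun I hI => ?_
  have : IsSimpleModule R I := hI
  infer_instance

theorem leftSocle_ne_bot [IsArtinianRing R] [Nontrivial R] : leftSocle R ≠ ⊥ := by
  obtain ⟨I, hI, -⟩ := (eq_bot_or_exists_atom_le (⊤ : Ideal R)).resolve_left top_ne_bot
  exact ne_bot_of_le_ne_bot hI.1 (le_sSup (isSimpleModule_iff_isAtom.2 hI))

theorem mul_eq_zero_of_mem_jacobson_of_mem_leftSocle {n y : R} (hn : n ∈ Ring.jacobson R)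
    (hy : y ∈ leftSocle R) : n * y = 0 :=
  congrArg Subtype.val <| Module.mem_annihilator.1
    (IsSemisimpleModule.jacobson_le_annihilator R (leftSocle R) hn) ⟨y, hy⟩

theorem mem_jacobson_of_mul_eq_zero [IsLocalRing R] {n x : R} (hnx : n * x = 0) (hx : x ≠ 0) :
    n ∈ Ring.jacobson R := by
  rw [← Ideal.jacobson_bot, Ideal.mem_jacobson_iff]
  intro a
  have not_isUnit : ¬ IsUnit (-(a * n)) := fun h =>
    hx <| h.mul_right_eq_zero.1 <| by rw [neg_mul, mul_assoc, hnx, mul_zero, neg_zero]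
  have isUnit_add_one : IsUnit (a * n + 1) :=
    (IsLocalRing.isUnit_or_isUnit_of_add_one (neg_add_cancel_left (a * n) 1)).resolve_left
      not_isUnit
  obtain ⟨z, hz⟩ := isUnit_add_one.exists_left_inv
  exact ⟨z, by rw [Ideal.mem_bot, mul_assoc, ← mul_add_one, hz, sub_self]⟩

end Socle

/-- A Frobenius functional on a `k`-algebra `R`: a linear functional whose kernel contains no
nonzero left ideal. `R` is a Frobenius algebra when it has one, and a symmetric algebra when it has
one that is moreover a trace, i.e. satisfies `lam (r * s) = lam (s * r)`. -/
def IsFrobeniusFunctional {k R : Type*} [CommSemiring k] [Semiring R] [Algebra k R]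
    (lam : R →ₗ[k] k) : Prop :=
  ∀ I : Ideal R, (I : Set R) ⊆ {x | lam x = 0} → I = ⊥

namespace IsFrobeniusFunctional

section CommSemiring

variable {k R : Type*} [CommSemiring k] [Ring R] [Algebra k R] {lam : R →ₗ[k] k}

theorem eq_zero_of_forall_map_mul_eq_zero (hlam : IsFrobeniusFunctional lam) {x : R}
    (hx : ∀ r, lam (r * x) = 0) : x = 0 := by
  refine Ideal.span_singleton_eq_bot.1 (hlam (Ideal.span {x}) fun z hz => ?_)
  obtain ⟨r, rfl⟩ := Ideal.mem_span_singleton'.1 hz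
  exact hx r

theorem exists_mem_leftSocle_ne_zero [IsArtinianRing R] [Nontrivial R]
    (hlam : IsFrobeniusFunctional lam) : ∃ x ∈ leftSocle R, lam x ≠ 0 := by
  by_contra! h
  exact leftSocle_ne_bot (hlam (leftSocle R) h)

end CommSemiring

variable {k R : Type*} [Field k] [Ring R] [Algebra k R] [FiniteDimensional k R]
  {lam : R →ₗ[k] k}

theorem exists_forall_mul_eq (hlam : IsFrobeniusFunctional lam) (φ : Module.Dual k R) :
    ∃ s, ∀ r, lam (r * s) = φ r := by
  let toDual : R →ₗ[k] Module.Dual k R := (LinearMap.mul k R).flip.compr₂ lam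
  have injective_toDual : Function.Injective toDual :=
    (injective_iff_map_eq_zero toDual).2 fun _ hx =>
      hlam.eq_zero_of_forall_map_mul_eq_zero (LinearMap.congr_fun hx)
  obtain ⟨s, hs⟩ := (LinearMap.injective_iff_surjective_of_finrank_eq_finrank
    Subspace.dual_finrank_eq.symm).1 injective_toDual φ
  exact ⟨s, LinearMap.congr_fun hs⟩

theorem dvd_of_forall_mul_eq_zero (hlam : IsFrobeniusFunctional lam) {x y : R}
    (h : ∀ n, n * x = 0 → n * y = 0) : x ∣ y := by
  have mem_range : lam ∘ₗ LinearMap.mulRight k y ∈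
      LinearMap.range (LinearMap.mulRight k x).dualMap := by
    rw [LinearMap.range_dualMap_eq_dualAnnihilator_ker, Submodule.mem_dualAnnihilator]
    intro n hn
    rw [LinearMap.comp_apply, LinearMap.mulRight_apply, h n hn, map_zero]
  obtain ⟨φ, hφ⟩ := mem_range
  obtain ⟨s, hs⟩ := hlam.exists_forall_mul_eq φ
  refine ⟨s, sub_eq_zero.1 (hlam.eq_zero_of_forall_map_mul_eq_zero fun r => ?_)⟩
  have lam_mul_eq : lam (r * y) = lam (r * (x * s)) :=
    calc lam (r * y) = φ (r * x) := (LinearMap.congr_fun hφ r).symm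
      _ = lam (r * (x * s)) := by rw [← hs, mul_assoc]
  rw [mul_sub, map_sub, lam_mul_eq, sub_self]

variable [IsLocalRing R]

theorem dvd_of_mem_leftSocle (hlam : IsFrobeniusFunctional lam) {x y : R} (hx : x ≠ 0)
    (hy : y ∈ leftSocle R) : x ∣ y :=
  hlam.dvd_of_forall_mul_eq_zero fun _ hnx =>
    mul_eq_zero_of_mem_jacobson_of_mem_leftSocle (mem_jacobson_of_mul_eq_zero hnx hx) hy

theorem of_trace_ne_zero_on_leftSocle (hlam : IsFrobeniusFunctional lam) {mu : R →ₗ[k] k}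
    (trace : ∀ r s : R, mu (r * s) = mu (s * r)) {y : R} (hy : y ∈ leftSocle R)
    (hmuy : mu y ≠ 0) : IsFrobeniusFunctional mu := by
  intro I hI
  by_contra hI0
  obtain ⟨x, hxI, hx0⟩ := Submodule.exists_mem_ne_zero_of_ne_bot hI0
  obtain ⟨s, rfl⟩ := hlam.dvd_of_mem_leftSocle hx0 hy
  rw [trace] at hmuy
  exact hmuy (hI (I.mul_mem_left s hxI))

end IsFrobeniusFunctional

/-- A local finite-dimensional algebra `R` over a field `k` is a symmetric
`k`-algebra iff it is a Frobenius `k`-algebra and the left socle of `R` is not contained in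
the commutator subgroup `[R,R]`. -/
theorem local_symmetric_iff_frobenius_and_socle_not_subset_commutators
    {k R : Type*} [Field k] [Ring R] [Algebra k R] [FiniteDimensional k R]
    [IsLocalRing R] :
    (∃ lam : R →ₗ[k] k, (∀ r s : R, lam (r * s) = lam (s * r)) ∧
        ∀ I : Ideal R, (I : Set R) ⊆ {x | lam x = 0} → I = ⊥) ↔
      ((∃ lam : R →ₗ[k] k, ∀ I : Ideal R, (I : Set R) ⊆ {x | lam x = 0} → I = ⊥) ∧
        ¬ ((leftSocle R : Set R) ⊆ (commutatorSubgroup R : Set R))) := by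
  constructor
  · rintro ⟨lam, trace, hlam⟩
    refine ⟨⟨lam, hlam⟩, fun socle_subset => ?_⟩
    have : IsArtinianRing R := IsArtinianRing.of_finite k R
    obtain ⟨x, hx, hlamx⟩ := IsFrobeniusFunctional.exists_mem_leftSocle_ne_zero hlam
    exact hlamx (commutatorSubgroup_le_ker_iff (f := lam.toAddMonoidHom).2 trace (socle_subset hx))
  · rintro ⟨⟨lam, hlam⟩, socle_not_subset⟩
    obtain ⟨y, hy, hy_notMem⟩ := Set.not_subset.1 socle_not_subset
    obtain ⟨mu, trace, hmuy⟩ := exists_trace_ne_zero_of_notMem_commutatorSubgroup k hy_notMem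
    exact ⟨mu, trace, IsFrobeniusFunctional.of_trace_ne_zero_on_leftSocle hlam trace hy hmuy⟩
end

section
/- Let R be a ring that is a finite-dimensional algebra over infinite fields k₁ and k₂. If R is a symmetric k₁-algebra, i.e., there exists a k₁-linear functional λ₁ : R → k₁ with λ₁(r*s) = λ₁(s*r) for all r, s ∈ R and whose kernel contains no nonzero left ideals of R, then R is a symmetric k₂-algebra, i.e., there exists a k₂-linear functional λ₂ : R → k₂ with λ₂(r*s) = λ₂(s*r) for all r, s ∈ R and whose kernel contains no nonzero left ideals of R. -/
/-!
Let `Z` be the center of `R`. Whether a functional `lam` is a symmetrizing form depends only on the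
largest `Z`-submodule `N` of `R` contained in `ker lam`: a left ideal lies in `ker lam` iff it lies
in `N`, and `lam` is a trace iff every commutator lies in `N`. So it suffices to find a
`k₂`-linear functional with the same `N`.

After passing to `M = R ⧸ N`, no nonzero `Z`-submodule of `M` lies in the kernel of the `k₁`-linear
functional. By duality every `k₁`-linear functional on `M` is then `x ↦ lam (z • x)` for some `z`,
hence every `Z`-linear map from a submodule of `M` to `M` is multiplication by an element of `Z`.
Thus isomorphic submodules are equal, so the simple submodules are pairwise non-isomorphic and
therefore independent. Nonzero vectors chosen one from each simple submodule are linearly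
independent over `k₂`, and a `k₂`-linear functional taking the value `1` at all of them has no
nonzero `Z`-submodule in its kernel.
-/

section KerCore

variable {k Z M M' P : Type*} [Semiring k] [Semiring Z] [AddCommMonoid M] [Module k M] [Module Z M]
  [AddCommMonoid M'] [Module k M'] [Module Z M'] [AddCommMonoid P] [Module k P]

/-- The largest `Z`-submodule contained in the kernel of a `k`-linear map `lam`, given as the set
of all `x` such that `lam` vanishes on `Z • x`. It allows functionals over different fields `k`
to be compared. -/
def kerCore (Z : Type*) [Semiring Z] [Module Z M] (lam : M →ₗ[k] P) : Submodule Z M where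
  carrier := {x | ∀ z : Z, lam (z • x) = 0}
  add_mem' hx hy z := by rw [smul_add, map_add, hx, hy, add_zero]
  zero_mem' z := by rw [smul_zero, map_zero]
  smul_mem' c x hx z := by rw [smul_smul]; exact hx (z * c)

theorem mem_kerCore {lam : M →ₗ[k] P} {x : M} : x ∈ kerCore Z lam ↔ ∀ z : Z, lam (z • x) = 0 :=
  Iff.rfl

theorem apply_eq_zero_of_mem_kerCore {lam : M →ₗ[k] P} {x : M} (hx : x ∈ kerCore Z lam) :
    lam x = 0 := by
  simpa only [one_smul] using hx 1

theorem le_kerCore_iff {lam : M →ₗ[k] P} {N : Submodule Z M} :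
    N ≤ kerCore Z lam ↔ ∀ x ∈ N, lam x = 0 :=
  ⟨fun h _ hx ↦ apply_eq_zero_of_mem_kerCore (h hx), fun h _ hx z ↦ h _ (N.smul_mem z hx)⟩

theorem kerCore_comp_restrictScalars [LinearMap.CompatibleSMul M M' k Z] (lam : M' →ₗ[k] P)
    (f : M →ₗ[Z] M') : kerCore Z (lam ∘ₗ f.restrictScalars k) = (kerCore Z lam).comap f := by
  ext x
  simp only [Submodule.mem_comap, mem_kerCore, LinearMap.comp_apply,
    LinearMap.restrictScalars_apply, map_smul]

end KerCore

section Duality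

variable {k Z M : Type*} [Field k] [AddCommGroup M] [Module k M] [FiniteDimensional k M]

theorem exists_apply_eq_apply_smul_of_kerCore_eq_bot [Semiring Z] [Algebra k Z] [Module Z M]
    [IsScalarTower k Z M] {lam : M →ₗ[k] k} (hlam : kerCore Z lam = ⊥) (g : M →ₗ[k] k) :
    ∃ z : Z, ∀ x, g x = lam (z • x) := by
  let B : Z →ₗ[k] Module.Dual k M := (Algebra.lsmul k k M).toLinearMap.compr₂ lam
  have hker : LinearMap.ker B.flip = ⊥ := by
    refine (Submodule.eq_bot_iff _).2 fun x hx ↦ (Submodule.mem_bot Z).1 ?_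
    rw [← hlam]
    exact LinearMap.congr_fun hx
  have hrange : LinearMap.range B = ⊤ := by
    rw [← Subspace.dualCoannihilator_dualAnnihilator_eq (W := LinearMap.range B),
      LinearMap.dualCoannihilator_range_eq_ker_flip, hker, Submodule.dualAnnihilator_bot]
  obtain ⟨z, hz⟩ := LinearMap.range_eq_top.1 hrange g
  exact ⟨z, fun x ↦ (LinearMap.congr_fun hz x).symm⟩

variable [CommRing Z] [Algebra k Z] [Module Z M] [IsScalarTower k Z M]

theorem exists_apply_eq_smul_of_kerCore_eq_bot {lam : M →ₗ[k] k} (hlam : kerCore Z lam = ⊥)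
    {N : Submodule Z M} (f : N →ₗ[Z] M) : ∃ z : Z, ∀ x : N, f x = z • (x : M) := by
  obtain ⟨g, hg⟩ := LinearMap.exists_extend (p := N.restrictScalars k)
    (lam ∘ₗ f.restrictScalars k)
  obtain ⟨z, hz⟩ := exists_apply_eq_apply_smul_of_kerCore_eq_bot hlam g
  have hrange : LinearMap.range (f - z • N.subtype) ≤ kerCore Z lam := by
    rw [le_kerCore_iff]
    rintro _ ⟨x, rfl⟩
    have hx : lam (f x) = lam (z • (x : M)) := (LinearMap.congr_fun hg x).symm.trans (hz x)
    rw [LinearMap.sub_apply, map_sub, hx]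
    exact sub_self _
  rw [hlam, le_bot_iff, LinearMap.range_eq_bot, sub_eq_zero] at hrange
  exact ⟨z, LinearMap.congr_fun hrange⟩

theorem eq_of_linearEquiv_of_kerCore_eq_bot {lam : M →ₗ[k] k} (hlam : kerCore Z lam = ⊥)
    {N N' : Submodule Z M} (e : N ≃ₗ[Z] N') : N = N' := by
  have le_of_equiv {N N' : Submodule Z M} (e : N ≃ₗ[Z] N') : N' ≤ N := by
    intro y hy
    obtain ⟨z, hz⟩ := exists_apply_eq_smul_of_kerCore_eq_bot hlam (N'.subtype ∘ₗ e.toLinearMap)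
    have hy_smul : y = z • (e.symm ⟨y, hy⟩ : M) := by
      simpa using hz (e.symm ⟨y, hy⟩)
    rw [hy_smul]
    exact N.smul_mem z (e.symm ⟨y, hy⟩).2
  exact le_antisymm (le_of_equiv e.symm) (le_of_equiv e)

end Duality

section Atoms

variable {Z M : Type*} [AddCommGroup M]

theorem sSupIndep_setOf_isAtom_of_eq_of_linearEquiv [Ring Z] [Module Z M]
    (h : ∀ S T : Submodule Z M, IsAtom T → Nonempty (S ≃ₗ[Z] T) → S = T) :
    sSupIndep {S : Submodule Z M | IsAtom S} := by
  refine (sSupIndep_isotypicComponents Z M).mono fun S hS ↦ ?_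
  refine ⟨S, isSimpleModule_iff_isAtom.2 hS, ?_⟩
  have hiso : {T : Submodule Z M | Nonempty (T ≃ₗ[Z] S)} = {S} :=
    Set.eq_singleton_iff_unique_mem.2 ⟨⟨.refl Z S⟩, fun T hT ↦ h T S hS hT⟩
  rw [isotypicComponent, hiso, sSup_singleton]

variable [Semiring Z] [Module Z M]

theorem iSupIndep_restrictScalars {ι k : Type*} [Semiring k] [Module k M] [SMul k Z]
    [IsScalarTower k Z M] {p : ι → Submodule Z M} (hp : iSupIndep p) :
    iSupIndep fun i ↦ (p i).restrictScalars k := by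
  intro i
  simp only [← Submodule.restrictScalars_iSup, Submodule.disjoint_restrictScalars_iff]
  exact hp i

theorem exists_kerCore_eq_bot_of_sSupIndep_isAtom (k : Type*) [Field k] [Module k M] [SMul k Z]
    [IsScalarTower k Z M] [IsAtomic (Submodule Z M)]
    (hindep : sSupIndep {S : Submodule Z M | IsAtom S}) :
    ∃ lam : M →ₗ[k] k, kerCore Z lam = ⊥ := by
  choose x hxS hx0 using fun S : {S : Submodule Z M | IsAtom S} ↦
    Submodule.exists_mem_ne_zero_of_ne_bot S.2.1
  have hx : LinearIndependent k x :=
    (iSupIndep_restrictScalars ((sSupIndep_iff _).1 hindep)).linearIndependent _ hxS hx0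
  obtain ⟨lam, hlam⟩ := Module.exists_dual_forall_apply_eq_one (hx.linearIndepOn Set.univ)
  refine ⟨lam, (eq_bot_or_exists_atom_le _).resolve_right ?_⟩
  rintro ⟨S, hS, hle⟩
  have hzero : lam (x ⟨S, hS⟩) = 0 := apply_eq_zero_of_mem_kerCore (hle (hxS ⟨S, hS⟩))
  exact one_ne_zero ((hlam ⟨S, hS⟩ (Set.mem_univ _)).symm.trans hzero)

end Atoms

section ChangeOfField

variable {k₁ : Type*} (k₂ : Type*) {Z M : Type*} [Field k₁] [Field k₂] [CommRing Z] [Algebra k₁ Z]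
  [SMul k₂ Z] [AddCommGroup M] [Module k₁ M] [Module k₂ M] [Module Z M] [IsScalarTower k₁ Z M]
  [IsScalarTower k₂ Z M] [FiniteDimensional k₁ M]

theorem exists_kerCore_eq_bot_of_kerCore_eq_bot {lam₁ : M →ₗ[k₁] k₁}
    (hlam₁ : kerCore Z lam₁ = ⊥) : ∃ lam₂ : M →ₗ[k₂] k₂, kerCore Z lam₂ = ⊥ := by
  have : IsArtinian Z M := isArtinian_of_tower k₁ inferInstance
  exact exists_kerCore_eq_bot_of_sSupIndep_isAtom k₂ <|
    sSupIndep_setOf_isAtom_of_eq_of_linearEquiv fun _ _ _ ⟨e⟩ ↦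
      eq_of_linearEquiv_of_kerCore_eq_bot hlam₁ e

theorem exists_kerCore_eq_kerCore (lam₁ : M →ₗ[k₁] k₁) :
    ∃ lam₂ : M →ₗ[k₂] k₂, kerCore Z lam₂ = kerCore Z lam₁ := by
  set N := kerCore Z lam₁
  let lamQ : M ⧸ N →ₗ[k₁] k₁ :=
    (N.restrictScalars k₁).liftQ lam₁ fun _ hx ↦ apply_eq_zero_of_mem_kerCore hx
  have hcomap : N = (kerCore Z lamQ).comap N.mkQ :=
    kerCore_comp_restrictScalars lamQ N.mkQ
  have hlamQ : kerCore Z lamQ = ⊥ := by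
    rw [← Submodule.map_comap_eq_of_surjective N.mkQ_surjective (kerCore Z lamQ), ← hcomap,
      N.mkQ_map_self]
  obtain ⟨mu, hmu⟩ := exists_kerCore_eq_bot_of_kerCore_eq_bot k₂ hlamQ
  refine ⟨mu ∘ₗ N.mkQ.restrictScalars k₂, ?_⟩
  rw [kerCore_comp_restrictScalars, hmu, Submodule.comap_bot, N.ker_mkQ]

end ChangeOfField

section Algebra

variable {k Z R P : Type*} [Semiring k] [CommSemiring Z] [Ring R] [Module k R] [Algebra Z R]
  [AddCommGroup P] [Module k P]

theorem forall_apply_mul_comm_iff_forall_commutator_mem_kerCore {lam : R →ₗ[k] P} :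
    (∀ r s, lam (r * s) = lam (s * r)) ↔ ∀ r s, r * s - s * r ∈ kerCore Z lam := by
  refine ⟨fun h r s z ↦ ?_, fun h r s ↦ ?_⟩
  · rw [smul_sub, map_sub, ← smul_mul_assoc, h, mul_smul_comm, sub_self]
  · rw [← sub_eq_zero, ← map_sub]
    exact apply_eq_zero_of_mem_kerCore (h r s)

theorem coe_ideal_subset_ker_iff_le_kerCore {lam : R →ₗ[k] P} {I : Ideal R} :
    (I : Set R) ⊆ {x | lam x = 0} ↔ I.restrictScalars Z ≤ kerCore Z lam :=
  (le_kerCore_iff (N := I.restrictScalars Z)).symm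

end Algebra

section Center

variable (k R : Type*) [CommSemiring k] [Ring R] [Algebra k R]

/-- The center of a `k`-algebra as a `k`-algebra. It is based on `Subring.center R` rather than
`Subalgebra.center k R`, so that structures over different fields live on the same type. -/
abbrev centerAlgebra : Algebra k (Subring.center R) :=
  ((algebraMap k R).codRestrict (Subring.center R) fun c ↦
    Subring.mem_center_iff.2 fun r ↦ (Algebra.commutes c r).symm).toAlgebra

attribute [local instance] centerAlgebra

theorem isScalarTower_center : IsScalarTower k (Subring.center R) R :=
  .of_algebraMap_eq fun _ ↦ rfl

attribute [local instance] isScalarTower_center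

theorem symmetric_independent_of_field_general
    {k₁ k₂ R : Type*} [Field k₁] [Field k₂] [Ring R] [Algebra k₁ R] [Algebra k₂ R]
    [FiniteDimensional k₁ R]
    (hsym : ∃ lam₁ : R →ₗ[k₁] k₁, (∀ r s : R, lam₁ (r * s) = lam₁ (s * r)) ∧
      ∀ I : Ideal R, (I : Set R) ⊆ {x | lam₁ x = 0} → I = ⊥) :
    ∃ lam₂ : R →ₗ[k₂] k₂, (∀ r s : R, lam₂ (r * s) = lam₂ (s * r)) ∧
      ∀ I : Ideal R, (I : Set R) ⊆ {x | lam₂ x = 0} → I = ⊥ := by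
  simp only [forall_apply_mul_comm_iff_forall_commutator_mem_kerCore (Z := Subring.center R),
    coe_ideal_subset_ker_iff_le_kerCore (Z := Subring.center R)] at hsym ⊢
  obtain ⟨lam₁, htrace, hideal⟩ := hsym
  obtain ⟨lam₂, hcore⟩ := exists_kerCore_eq_kerCore k₂ (Z := Subring.center R) lam₁
  rw [← hcore] at htrace hideal
  exact ⟨lam₂, htrace, hideal⟩

end Center

/-- **Corollary: being a symmetric algebra is independent of the field.**
Let `R` be a ring that is a finite-dimensional algebra over infinite fields `k₁` and `k₂`.
If `R` is a symmetric `k₁`-algebra then `R` is a symmetric `k₂`-algebra. -/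
theorem symmetric_independent_of_field
    {k₁ k₂ R : Type*} [Field k₁] [Field k₂] [Infinite k₁] [Infinite k₂] [Ring R]
    [Algebra k₁ R] [Algebra k₂ R]
    [FiniteDimensional k₁ R] [FiniteDimensional k₂ R]
    (hsym : ∃ lam₁ : R →ₗ[k₁] k₁, (∀ r s : R, lam₁ (r * s) = lam₁ (s * r)) ∧
      ∀ I : Ideal R, (I : Set R) ⊆ {x | lam₁ x = 0} → I = ⊥) :
    ∃ lam₂ : R →ₗ[k₂] k₂, (∀ r s : R, lam₂ (r * s) = lam₂ (s * r)) ∧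
      ∀ I : Ideal R, (I : Set R) ⊆ {x | lam₂ x = 0} → I = ⊥ :=
  symmetric_independent_of_field_general hsym
end
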